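/- Let T satisfy (A1)–(A4) and let D > 1 be the distortion constant of the Distortion Lemma. For every index ȷ ≥ 1 there exists δ ∈ (0,1), namely δ = D/(D + Leb(I_ȷ)), such that every Borel set C ⊆ I_ȷ with Leb(C)/Leb(I_ȷ) > δ satisfies Leb(C ∩ TC) > 0, where TC is the forward image of C under T. -/

import Mathlib

open MeasureTheory Set Filter

/-- An interval map `T : [0,1] → [0,1]` which is Markov with respect to the
partition `{[a_j, a_{j+1}]}` given by the strictly increasing sequence
`0 = a_0 < a_1 < ⋯` with supremum `1`, satisfying hypotheses (A1)–(A4).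
The branch extensions are `φ j`, with first and second derivatives
`φd j` and `φdd j` (taken within `[a_j, a_{j+1}]`). -/
structure IntervalMapSetup where
  T : ℝ → ℝ
  a : ℕ → ℝ
  φ : ℕ → ℝ → ℝ
  φd : ℕ → ℝ → ℝ
  φdd : ℕ → ℝ → ℝ
  Λ : ℝ
  K : ℝ
  β : ℝ
  c₁ : ℝ
  c₂ : ℝ
  ha0 : a 0 = 0
  ha_mono : StrictMono a
  ha_lt : ∀ j, a j < 1
  ha_lim : Tendsto a atTop (nhds 1)
  hT_maps : MapsTo T (Icc 0 1) (Icc 0 1)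
  -- `T` coincides with the branch `φ j` on the open interval `(a_j, a_{j+1})`
  hT_eq : ∀ j, ∀ x ∈ Ioo (a j) (a (j+1)), T x = φ j x
  -- (A1): each branch is a bijection onto `[0,1]`, `C²` up to the boundary
  hφ_bij : ∀ j, BijOn (φ j) (Icc (a j) (a (j+1))) (Icc 0 1)
  hφ_d : ∀ j, ∀ x ∈ Icc (a j) (a (j+1)),
    HasDerivWithinAt (φ j) (φd j x) (Icc (a j) (a (j+1))) x
  hφ_dd : ∀ j, ∀ x ∈ Icc (a j) (a (j+1)),
    HasDerivWithinAt (φd j) (φdd j x) (Icc (a j) (a (j+1))) x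
  hφdd_cont : ∀ j, ContinuousOn (φdd j) (Icc (a j) (a (j+1)))
  -- (A2): uniform expansion on branches `j ≥ 1`
  hΛ : 1 < Λ
  hA2 : ∀ j, 1 ≤ j → ∀ x ∈ Icc (a j) (a (j+1)), Λ ≤ |φd j x|
  -- (A3): distortion bound
  hK : 0 < K
  hA3 : ∀ j, ∀ x ∈ Icc (a j) (a (j+1)), |φdd j x| / (φd j x) ^ 2 ≤ K
  -- (A4): indifferent fixed point at 0
  hβ : 0 ≤ β
  hc₁ : 0 < c₁
  hc₁₂ : c₁ < c₂
  hA4_conv : ConvexOn ℝ (Icc (a 0) (a 1)) (φ 0)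
  hA4_fix : φ 0 0 = 0
  hA4_d1 : φd 0 0 = 1
  hA4_exp : ∀ x : ℝ, 0 < x → x ≤ a 1 → 1 < φd 0 x
  hA4_dd : ∀ x ∈ Ioo (0:ℝ) (a 1), c₁ * x ^ β ≤ φdd 0 x ∧ φdd 0 x ≤ c₂ * x ^ β

/-!
If `C ∩ T C` were null, then, `T` mapping `I` onto almost all of `I`, almost all of `C` would have
to be covered by the image of `I \ C`. Bounded distortion then gives `|C| ≤ D (1 - |C| / |I|)`,
that is, `|C| / |I| ≤ D / (D + |I|)`.
-/

section ImageCover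

variable {α β : Type*} [MeasurableSpace β] {μ : Measure β}

lemma ae_le_image_of_surjOn_of_countable_ne [NullSingletonClass μ] {f g : α → β}
    {s : Set α} {t : Set β} (hf : SurjOn f s t) (hfg : {x ∈ s | g x ≠ f x}.Countable) :
    t ≤ᵐ[μ] g '' s := by
  refine ae_le_set.2 (measure_mono_null ?_ ((hfg.image f).measure_zero μ))
  rintro y ⟨hyt, hy⟩
  obtain ⟨x, hxs, rfl⟩ := hf hyt
  exact ⟨x, ⟨hxs, fun hgf => hy ⟨x, hxs, hgf⟩⟩, rfl⟩

lemma measure_le_measure_inter_image_add_measure_image_sdiff {T : β → β} {s t : Set β}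
    (hs : s ≤ᵐ[μ] T '' t) : μ s ≤ μ (s ∩ T '' s) + μ (T '' (t \ s)) := by
  have hcover : s ∩ T '' t ⊆ (s ∩ T '' s) ∪ T '' (t \ s) := by
    rintro _ ⟨hx, y, hy, rfl⟩
    by_cases hys : y ∈ s
    · exact Or.inl ⟨hx, y, hys, rfl⟩
    · exact Or.inr ⟨y, ⟨hy, hys⟩, rfl⟩
  calc μ s ≤ μ (s ∩ T '' t) := measure_mono_ae <| by
        filter_upwards [hs] with x hx hxs using ⟨hxs, hx hxs⟩
    _ ≤ μ ((s ∩ T '' s) ∪ T '' (t \ s)) := measure_mono hcover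
    _ ≤ μ (s ∩ T '' s) + μ (T '' (t \ s)) := measure_union_le _ _

end ImageCover

lemma div_le_div_add_of_le_mul_sub_div {c D m : ℝ} (hD : 0 ≤ D) (hm : 0 < m)
    (h : c ≤ D * ((m - c) / m)) : c / m ≤ D / (D + m) := by
  rw [← mul_div_assoc, le_div_iff₀ hm] at h
  rw [div_le_div_iff₀ hm (by positivity)]
  linarith

section Overlap

variable {X : Type*} [MeasurableSpace X] {μ : Measure X} {T : X → X} {I C : Set X} {D : ℝ}

lemma measureReal_div_le_of_measure_inter_image_eq_zero (hI₀ : μ I ≠ 0) (hI : μ I ≠ ⊤)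
    (hcover : I ≤ᵐ[μ] T '' I) (hD : 0 ≤ D) (hCI : C ⊆ I) (hC : MeasurableSet C)
    (hdist : μ (T '' (I \ C)) ≤ ENNReal.ofReal D * (μ (I \ C) / μ I))
    (hnull : μ (C ∩ T '' C) = 0) :
    μ.real C / μ.real I ≤ D / (D + μ.real I) := by
  have hle : μ C ≤ ENNReal.ofReal D * (μ (I \ C) / μ I) :=
    calc μ C ≤ μ (C ∩ T '' C) + μ (T '' (I \ C)) :=
          measure_le_measure_inter_image_add_measure_image_sdiff (hCI.eventuallyLE.trans hcover)
      _ = μ (T '' (I \ C)) := by rw [hnull, zero_add]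
      _ ≤ ENNReal.ofReal D * (μ (I \ C) / μ I) := hdist
  have hbound_ne_top : ENNReal.ofReal D * (μ (I \ C) / μ I) ≠ ⊤ :=
    ENNReal.mul_ne_top ENNReal.ofReal_ne_top
      (ENNReal.div_ne_top (measure_ne_top_of_subset sdiff_subset hI) hI₀)
  have hle_real : μ.real C ≤ D * ((μ.real I - μ.real C) / μ.real I) := by
    rw [← measureReal_sdiff hCI hC hI]
    simpa [Measure.real, hD] using ENNReal.toReal_mono hbound_ne_top hle
  exact div_le_div_add_of_le_mul_sub_div hD (ENNReal.toReal_pos hI₀ hI) hle_real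

theorem overlap_of_large_density_general (hI_meas : MeasurableSet I) (hI₀ : μ I ≠ 0)
    (hI : μ I ≠ ⊤) (hcover : I ≤ᵐ[μ] T '' I) (hD : 0 < D)
    (hdist : ∀ B ⊆ I, MeasurableSet B → μ (T '' B) ≤ ENNReal.ofReal D * (μ B / μ I)) :
    0 < D / (D + μ.real I) ∧ D / (D + μ.real I) < 1 ∧
      ∀ C ⊆ I, MeasurableSet C → ENNReal.ofReal (D / (D + μ.real I)) < μ C / μ I →
        0 < μ (C ∩ T '' C) := by
  have hI_pos : 0 < μ.real I := ENNReal.toReal_pos hI₀ hI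
  refine ⟨by positivity, (div_lt_one (by positivity)).2 (by linarith), fun C hCI hC hdens => ?_⟩
  refine pos_iff_ne_zero.2 fun hnull => hdens.not_ge ?_
  have hC_div_ne_top : μ C / μ I ≠ ⊤ :=
    ENNReal.div_ne_top (measure_ne_top_of_subset hCI hI) hI₀
  rw [ENNReal.le_ofReal_iff_toReal_le hC_div_ne_top (by positivity), ENNReal.toReal_div]
  exact measureReal_div_le_of_measure_inter_image_eq_zero hI₀ hI hcover hD.le hCI hC
    (hdist _ sdiff_subset (hI_meas.diff hC)) hnull

end Overlap

namespace IntervalMapSetup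

variable (S : IntervalMapSetup) (j : ℕ)

lemma a_lt_a_succ : S.a j < S.a (j + 1) :=
  S.ha_mono j.lt_succ_self

lemma Icc_subset_unitInterval : Icc (S.a j) (S.a (j + 1)) ⊆ Icc 0 1 :=
  Icc_subset_Icc (S.ha0 ▸ S.ha_mono.monotone j.zero_le) (S.ha_lt _).le

lemma countable_T_ne_φ : {x ∈ Icc (S.a j) (S.a (j + 1)) | S.T x ≠ S.φ j x}.Countable := by
  refine (Set.toFinite {S.a j, S.a (j + 1)}).countable.mono fun x ⟨hx, hne⟩ => ?_
  rw [← Icc_sdiff_Ioo_same (S.a_lt_a_succ j).le]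
  exact ⟨hx, fun hx' => hne (S.hT_eq j x hx')⟩

lemma Icc_ae_le_image_T :
    Icc (S.a j) (S.a (j + 1)) ≤ᵐ[volume] S.T '' Icc (S.a j) (S.a (j + 1)) :=
  (S.Icc_subset_unitInterval j).eventuallyLE.trans
    (ae_le_image_of_surjOn_of_countable_ne (S.hφ_bij j).surjOn (S.countable_T_ne_φ j))

end IntervalMapSetup

/-- given the distortion constant `D > 1` (with
`Leb(T B) ≤ D · Leb(B)/Leb(I_ȷ)` for Borel `B ⊆ I_ȷ`, `ȷ ≥ 1`), for every `ȷ ≥ 1` the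
number `δ = D/(D + Leb(I_ȷ))` lies in `(0,1)` and every Borel `C ⊆ I_ȷ` with
`Leb(C)/Leb(I_ȷ) > δ` satisfies `Leb(C ∩ T C) > 0`. -/
theorem overlap_of_large_density (S : IntervalMapSetup) (D : ℝ) (hD : 1 < D)
    (hDist : ∀ j : ℕ, 1 ≤ j → ∀ B : Set ℝ, B ⊆ Set.Icc (S.a j) (S.a (j + 1)) →
      MeasurableSet B →
      volume (S.T '' B) ≤
        ENNReal.ofReal D * (volume B / volume (Set.Icc (S.a j) (S.a (j + 1))))) :
    ∀ j : ℕ, 1 ≤ j →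
      0 < D / (D + (S.a (j + 1) - S.a j)) ∧ D / (D + (S.a (j + 1) - S.a j)) < 1 ∧
      ∀ C : Set ℝ, C ⊆ Set.Icc (S.a j) (S.a (j + 1)) → MeasurableSet C →
        ENNReal.ofReal (D / (D + (S.a (j + 1) - S.a j))) <
          volume C / volume (Set.Icc (S.a j) (S.a (j + 1))) →
        0 < volume (C ∩ S.T '' C) := by
  intro j hj
  have hlt := S.a_lt_a_succ j
  rw [← Real.volume_real_Icc_of_le hlt.le]
  exact overlap_of_large_density_general measurableSet_Icc (by simpa using hlt)
    measure_Icc_lt_top.ne (S.Icc_ae_le_image_T j) (zero_lt_one.trans hD) (hDist j hj)
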